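/- arXiv:1608.07350 — 2 statements merged into one kernel-verified Lean document; each statement's English description precedes it below -/
import Mathlib

section
/- Let r ∈ ℤ, let 1 ≤ h ≤ n, and set j = v̄_p(h). Then E_h(M_L^r) ⊆ M_K^{⌈(i_j + hr)/n⌉}, and consequently g_h(r) ≥ ⌈(i_j + hr)/n⌉. -/
/-!
For a uniformizer `π` of `L` write `α = ∑_{m < n} a_m π^m` with `a_m ∈ K`; the terms have valuations
in distinct classes modulo `n`, so each of them has valuation at least `r` when `v_L(α) ≥ r`
(`term_ge`). By the fundamental theorem on symmetric polynomials there is a universal polynomial `D`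
with integer coefficients such that `E_h(α) = D(a, c)`, where the `c_k` are the coefficients of the
minimal polynomial of `π` (`exists_universal`). Choosing `w` with `v_L(w) = r` and dividing
`σ(α)` by `w` and `σ(π)` by `π`, one finds `E_h(α) = w^h D(b, c')`, where the elements
`b_m = a_m π^m / w` and `c'_k = c_k / π^k` of `L` are integral, the latter because the minimal
polynomial is Eisenstein (`exists_scaling`, `eisenstein`). As `v_L(w^h) = hr`, it remains to see that
every monomial of `D(b, c')` has valuation at least `i_j` (`monomial_ge`).

The arithmetic input is a divisibility of the coefficients of `D`. Let `q ∣ n` and set `c_k = 0`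
for all `k` with `q ∤ k`. Newton's identities show that all power sums of the roots become divisible
by `q` (`dvd_psum`), and, applied once more to the conjugates of `α`, that `h e_h` is a combination
of such power sums. So `q` divides `h` times the coefficient of every monomial that involves only
`c_k` with `q ∣ k`. For `q = p^t`, `t` the least `v̄_p(k)` among the `c_k` occurring in the monomial,
the coefficient is divisible by `p^(t-j)` if `t ≥ j`, and the monomial has valuation at least
`n v_K(c_k) - k + (t - j) e_L ≥ i_j`; if `t < j`, a single factor `c'_k` already gives the bound
`n v_K(c_k) - k ≥ i_j`. A monomial without any `c_k` has coefficient divisible by `p^(ν-j)` and is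
compared with `n v_K(c_n) - n = 0`.
-/


open scoped Classical

/-- `Ecoef K L h α` is `E_h(α) = e_h(σ₁(α),…,σₙ(α))`, characterized by the fact that
`(-1)^h * E_h(α)` is the coefficient of `X^(n-h)` in the characteristic polynomial of
multiplication by `α` on `L` as a `K`-vector space. -/
noncomputable def Ecoef (K L : Type) [Field K] [Field L] [Algebra K L]
    [FiniteDimensional K L] (h : ℕ) (α : L) : K :=
  (-1) ^ h * ((LinearMap.mulLeft K α).charpoly.coeff (Module.finrank K L - h))

/-- `cCoef K L πL n h` is `c_h`, where the minimal polynomial of the uniformizer `πL` is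
`X^n - c₁X^{n-1} + ⋯ + (-1)^{n-1}c_{n-1}X + (-1)^n c_n`. -/
noncomputable def cCoef (K L : Type) [Field K] [Field L] [Algebra K L]
    (πL : L) (n h : ℕ) : K :=
  (-1) ^ h * (minpoly K πL).coeff (n - h)

/-- The valuation of `x`, with value `⊤` at `x = 0`. -/
noncomputable def vext (L : Type) [Field L] (vL : L → ℤ) (x : L) : WithTop ℤ :=
  if x = 0 then ⊤ else (vL x : WithTop ℤ)

/-- `iPi p ν n K vK c j` is `i_j^{π_L} = min{ n·v_K(c_h) - h : 1 ≤ h ≤ n, v̄_p(h) ≤ j }`,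
an element of `ℤ_{≥0} ∪ {∞}`. -/
noncomputable def iPi (p ν n : ℕ) (K : Type) [Field K] (vK : K → ℤ) (c : ℕ → K)
    (j : ℕ) : WithTop ℤ :=
  ((Finset.Icc 1 n).filter fun h => min (padicValNat p h) ν ≤ j).inf fun h =>
    if c h = 0 then ⊤ else (((n : ℤ) * vK (c h) - (h : ℤ) : ℤ) : WithTop ℤ)

/-- `iIdx p ν n K L vK vL c j` is the `j`-th index of inseparability
`i_j = min{ i_{j'}^{π_L} + (j' - j)·e_L : j ≤ j' ≤ ν }`, where `e_L = v_L(p)`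
(with `e_L = ∞` when `p = 0` in `L`). -/
noncomputable def iIdx (p ν n : ℕ) (K L : Type) [Field K] [Field L]
    (vK : K → ℤ) (vL : L → ℤ) (c : ℕ → K) (j : ℕ) : WithTop ℤ :=
  (Finset.Icc j ν).inf fun j' =>
    iPi p ν n K vK c j' +
      (j' - j) • (if (p : L) = 0 then (⊤ : WithTop ℤ) else (vL (p : L) : WithTop ℤ))

/-! ### Symmetric functions of a generic element -/

section Generic

open MvPolynomial

/-- The generic polynomial `∑_{m < n} a_m X^m`, with indeterminate coefficients `a_m` over `ℤ`. -/
noncomputable def genPoly (n : ℕ) : Polynomial (MvPolynomial (Fin n) ℤ) :=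
  ∑ m : Fin n, Polynomial.C (X m) * Polynomial.X ^ (m : ℕ)

/-- Newton's identities evaluated at arbitrary ring elements. -/
lemma newton_eval {σ B : Type*} [Fintype σ] [CommRing B] [Algebra ℤ B] (x : σ → B) (k : ℕ) :
    (k : B) * aeval x (esymm σ ℤ k) = (-1) ^ (k + 1) *
      ∑ a ∈ Finset.HasAntidiagonal.antidiagonal k with a.1 < k,
        (-1) ^ a.1 * aeval x (esymm σ ℤ a.1) * ∑ i, x i ^ a.2 := by
  have := congrArg (aeval x) (mul_esymm_eq_sum σ ℤ k)
  simpa [psum] using this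

variable {A : Type*} [CommRing A] {n : ℕ} (q : ℕ)

/-- The specialization `c_k ↦ 0` for all `k` not divisible by `q`; the variable of index `i`
stands for `c_{i+1}`. -/
noncomputable def killVars (A : Type*) [CommRing A] (n q : ℕ) :
    MvPolynomial (Fin n) A →ₐ[A] MvPolynomial (Fin n) A :=
  aeval fun i : Fin n => if q ∣ (i : ℕ) + 1 then X i else 0

lemma coeff_killVars (P : MvPolynomial (Fin n) A) (d : Fin n →₀ ℕ)
    (hd : ∀ i ∈ d.support, q ∣ (i : ℕ) + 1) : coeff d (killVars A n q P) = coeff d P := by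
  induction P using MvPolynomial.induction_on' with
  | add f g hf hg => simp [hf, hg]
  | monomial e a =>
    by_cases he : ∀ i ∈ e.support, q ∣ (i : ℕ) + 1
    · have : killVars A n q (monomial e a) = monomial e a := by
        rw [killVars, aeval_monomial, monomial_eq]
        congr 1
        exact Finsupp.prod_congr fun i hi => by rw [if_pos (he i hi)]
      rw [this]
    · have hne : e ≠ d := fun h => he (h ▸ hd)
      push Not at he
      obtain ⟨i, hi, hq⟩ := he
      have : killVars A n q (monomial e a) = 0 := by
        rw [killVars, aeval_monomial, Finsupp.prod,
          Finset.prod_eq_zero hi (by rw [if_neg hq, zero_pow (Finsupp.mem_support_iff.1 hi)]),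
          mul_zero]
      rw [this, coeff_zero, coeff_monomial, if_neg hne]

variable {σ : Type*} [Fintype σ]

/-- The power sums, expressed through the elementary symmetric polynomials `c_k`, become divisible
by `q` once the `c_k` with `q ∤ k` are set to `0`, provided `q ∣ n`. -/
lemma dvd_psum (hσ : Fintype.card σ = n) (hq : q ∣ n) (m : ℕ) :
    (q : MvPolynomial (Fin n) A) ∣ killVars A n q ((esymmAlgEquiv σ A hσ).symm
      ⟨psum σ A m, psum_isSymmetric σ A m⟩) := by
  set ψ : symmetricSubalgebra σ A →ₐ[A] MvPolynomial (Fin n) A :=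
    (killVars A n q).comp (esymmAlgEquiv σ A hσ).symm.toAlgHom with hψ
  change (q : MvPolynomial (Fin n) A) ∣ ψ ⟨psum σ A m, psum_isSymmetric σ A m⟩
  induction m using Nat.strong_induction_on with
  | _ m ih =>
  rcases Nat.eq_zero_or_pos m with rfl | hm
  · have : (⟨psum σ A 0, psum_isSymmetric σ A 0⟩ : symmetricSubalgebra σ A) = (n : ℕ) := by
      apply Subtype.ext
      simp [psum_zero, hσ]
    rw [this, map_natCast]
    exact_mod_cast Nat.cast_dvd_cast hq
  · have key : (⟨psum σ A m, psum_isSymmetric σ A m⟩ : symmetricSubalgebra σ A) =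
        (-1) ^ (m + 1) * (m : symmetricSubalgebra σ A) * ⟨esymm σ A m, esymm_isSymmetric σ A m⟩ -
        ∑ a ∈ Finset.HasAntidiagonal.antidiagonal m with a.1 ∈ Set.Ioo 0 m,
          (-1) ^ a.1 * ⟨esymm σ A a.1, esymm_isSymmetric σ A a.1⟩ *
            ⟨psum σ A a.2, psum_isSymmetric σ A a.2⟩ := by
      apply Subtype.ext
      simpa using psum_eq_mul_esymm_sub_sum σ A m hm
    rw [key, map_sub, map_sum]
    refine dvd_sub ?_ (Finset.dvd_sum fun a ha => ?_)
    · by_cases hqm : q ∣ m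
      · rw [map_mul, map_mul, map_natCast]
        exact (Dvd.dvd.mul_left (Nat.cast_dvd_cast hqm) _).mul_right _
      · have : ψ ⟨esymm σ A m, esymm_isSymmetric σ A m⟩ = 0 := by
          by_cases hmn : m ≤ n
          · obtain ⟨i, rfl⟩ : ∃ i : Fin n, m = (i : ℕ) + 1 := ⟨⟨m - 1, by omega⟩, by simp; omega⟩
            have := esymmAlgEquiv_symm_apply A hσ i
            simp only [hψ, AlgHom.comp_apply]
            change killVars A n q ((esymmAlgEquiv σ A hσ).symm _) = 0
            rw [this, killVars, aeval_X, if_neg hqm]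
          · have : (⟨esymm σ A m, esymm_isSymmetric σ A m⟩ : symmetricSubalgebra σ A) = 0 := by
              apply Subtype.ext
              simp only [esymm]
              rw [Finset.powersetCard_eq_empty.2 (by rw [Finset.card_univ]; omega)]
              simp
            rw [this, map_zero]
        rw [map_mul, this, mul_zero]
        exact dvd_zero _
    · simp only [Finset.mem_filter, Finset.HasAntidiagonal.mem_antidiagonal, Set.mem_Ioo] at ha
      rw [map_mul]
      exact (ih a.2 (by omega)).mul_left _

/-- There is a universal polynomial `D` over `A = ℤ[a_0,…,a_{n-1}]` expressing
`e_h(f(x_1),…,f(x_n))` through the elementary symmetric functions `c_k` of the `x_i`, where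
`f = ∑ a_m X^m`. If `q ∣ n` and a monomial of `D` only involves `c_k` with `q ∣ k`, then `h` times
its coefficient is divisible by `q`: by Newton's identities `h e_h` is a combination of the
`∑ f(x_i)^l`, `l ≥ 1`, hence of power sums of the `x_i`. -/
lemma exists_universal (hσ : Fintype.card σ = n) (h : ℕ) :
    ∃ D : MvPolynomial (Fin n) (MvPolynomial (Fin n) ℤ),
      aeval (fun i : Fin n => esymm σ (MvPolynomial (Fin n) ℤ) (i + 1)) D =
        aeval (fun i : σ => Polynomial.aeval (X i : MvPolynomial σ (MvPolynomial (Fin n) ℤ))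
          (genPoly n)) (esymm σ ℤ h) ∧
      ∀ q : ℕ, q ∣ n → ∀ d : Fin n →₀ ℕ, (∀ i ∈ d.support, q ∣ (i : ℕ) + 1) →
        (q : MvPolynomial (Fin n) ℤ) ∣ (h : MvPolynomial (Fin n) ℤ) * coeff d D := by
  set A := MvPolynomial (Fin n) ℤ
  set F : σ → MvPolynomial σ A := fun i => Polynomial.aeval (X i) (genPoly n) with hF
  have renF : ∀ (e : Equiv.Perm σ) i, rename e (F i) = F (e i) := by
    intro e i
    have := Polynomial.aeval_algHom_apply (rename e : MvPolynomial σ A →ₐ[A] _) (X i) (genPoly n)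
    rw [rename_X] at this
    exact this.symm
  have symE : ∀ k, aeval F (esymm σ ℤ k) ∈ symmetricSubalgebra σ A := by
    intro k e
    simp only [esymm, map_sum, map_prod, aeval_X, renF]
    have := congrArg (aeval F) (rename_esymm σ ℤ k e)
    simpa [esymm] using this
  have symP : ∀ g : Polynomial A, ∑ i, Polynomial.aeval (X i : MvPolynomial σ A) g =
      ((∑ l ∈ g.support, g.coeff l • (⟨psum σ A l, psum_isSymmetric σ A l⟩ :
        symmetricSubalgebra σ A) : symmetricSubalgebra σ A) : MvPolynomial σ A) := by
    intro g
    simp only [Polynomial.aeval_eq_sum_range, AddSubmonoidClass.coe_finsetSum]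
    rw [Finset.sum_comm]
    symm
    refine (Finset.sum_subset Polynomial.supp_subset_range_natDegree_succ ?_).trans ?_
    · intro l _ hl
      rw [Polynomial.notMem_support_iff.1 hl]
      simp
    · refine Finset.sum_congr rfl fun l _ => ?_
      simp [psum, Finset.smul_sum]
  set ε := esymmAlgEquiv σ A hσ
  refine ⟨ε.symm ⟨_, symE h⟩, ?_, ?_⟩
  · rw [← esymmAlgHom_apply]
    have := ε.apply_symm_apply ⟨_, symE h⟩
    exact congrArg Subtype.val this
  · intro q hq d hd
    set ψ : symmetricSubalgebra σ A →ₐ[A] MvPolynomial (Fin n) A :=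
      (killVars A n q).comp ε.symm.toAlgHom with hψ
    have key : (h : symmetricSubalgebra σ A) * ⟨_, symE h⟩ = (-1) ^ (h + 1) *
        ∑ a ∈ Finset.HasAntidiagonal.antidiagonal h with a.1 < h, (-1) ^ a.1 * ⟨_, symE a.1⟩ *
          ∑ l ∈ (genPoly n ^ a.2).support, (genPoly n ^ a.2).coeff l •
            (⟨psum σ A l, psum_isSymmetric σ A l⟩ : symmetricSubalgebra σ A) := by
      apply Subtype.ext
      have := newton_eval F h
      have h2 : ∀ l, ∑ i, F i ^ l = ∑ i, Polynomial.aeval (X i) (genPoly n ^ l) := fun l =>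
        Finset.sum_congr rfl fun i _ => by simp [hF]
      simp only [h2, symP] at this
      simpa using this
    have hdvd : (q : MvPolynomial (Fin n) A) ∣ ψ ((h : symmetricSubalgebra σ A) * ⟨_, symE h⟩) := by
      rw [key, map_mul, map_sum]
      refine Dvd.dvd.mul_left (Finset.dvd_sum fun a _ => ?_) _
      rw [map_mul, map_sum]
      refine Dvd.dvd.mul_left (Finset.dvd_sum fun l _ => ?_) _
      rw [map_smul]
      exact dvd_smul_of_dvd _ (dvd_psum q hσ hq l)
    rw [map_mul, map_natCast] at hdvd
    rw [← coeff_killVars q _ d hd]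
    obtain ⟨w, hw⟩ := hdvd
    refine ⟨coeff d w, ?_⟩
    have := congrArg (coeff d) hw
    rw [← map_natCast (C : A →+* MvPolynomial (Fin n) A), coeff_C_mul,
      ← map_natCast (C : A →+* MvPolynomial (Fin n) A), coeff_C_mul] at this
    exact this

/-- Cancellation of the prime-to-`p` part and of the `p`-part of `h`. -/
lemma pow_dvd_of_dvd_mul {p h t : ℕ} (hp : p.Prime) (hh : h ≠ 0) {a : MvPolynomial (Fin n) ℤ}
    (H : ((p ^ t : ℕ) : MvPolynomial (Fin n) ℤ) ∣ (h : MvPolynomial (Fin n) ℤ) * a)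
    (ht : padicValNat p h ≤ t) :
    ((p ^ (t - padicValNat p h) : ℕ) : MvPolynomial (Fin n) ℤ) ∣ a := by
  have : Fact p.Prime := ⟨hp⟩
  obtain ⟨w, hw⟩ := (pow_padicValNat_dvd : p ^ padicValNat p h ∣ h)
  set j := padicValNat p h
  have hcop : Nat.Coprime (p ^ (t - j)) w := by
    apply Nat.Coprime.pow_left
    rw [hp.coprime_iff_not_dvd]
    rintro ⟨z, rfl⟩
    apply pow_succ_padicValNat_not_dvd (p := p) hh
    exact ⟨z, by rw [pow_succ, mul_assoc]; exact hw⟩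
  have hpj : ((p ^ j : ℕ) : MvPolynomial (Fin n) ℤ) ≠ 0 :=
    Nat.cast_ne_zero.2 (pow_ne_zero _ hp.ne_zero)
  rw [show p ^ t = p ^ j * p ^ (t - j) by rw [← pow_add]; congr 1; omega, hw, Nat.cast_mul,
    Nat.cast_mul, mul_assoc, mul_dvd_mul_iff_left hpj] at H
  refine IsCoprime.dvd_of_dvd_mul_left ?_ H
  have := (Nat.isCoprime_iff_coprime.2 hcop).map (Int.castRingHom (MvPolynomial (Fin n) ℤ))
  simpa using this

end Generic

/-! ### Conjugates and the coefficients `E_h` -/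

section Conjugates

variable {K L : Type} [Field K] [Field L] [Algebra K L] [FiniteDimensional K L]
  [Algebra.IsSeparable K L]

/-- Both sides agree at every point of the infinite field `K`, where they are norms. -/
lemma charpoly_map_eq [Infinite K] (α : L) :
    (LinearMap.mulLeft K α).charpoly.map (algebraMap K (AlgebraicClosure L)) =
      ∏ σ : L →ₐ[K] AlgebraicClosure L, (Polynomial.X - Polynomial.C (σ α)) := by
  refine Polynomial.eq_of_infinite_eval_eq _ _
    ((Set.infinite_range_of_injective (algebraMap K (AlgebraicClosure L)).injective).mono ?_)
  rintro _ ⟨x, rfl⟩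
  have h1 := Algebra.norm_eq_prod_embeddings K (AlgebraicClosure L) (algebraMap K L x - α)
  simp only [Set.mem_ofPred_eq, Polynomial.eval_map_algebraMap, Polynomial.aeval_algebraMap_apply,
    Polynomial.eval_prod, Polynomial.eval_sub, Polynomial.eval_X, Polynomial.eval_C]
  simp only [map_sub, AlgHom.commutes] at h1
  rw [← h1]
  congr 1
  rw [Polynomial.coe_aeval_eq_eval, LinearMap.eval_charpoly, Algebra.norm_apply]
  congr 1
  ext y
  simp [Algebra.smul_def]

lemma algebraMap_Ecoef [Infinite K] {h : ℕ} (hh : h ≤ Module.finrank K L) (α : L) :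
    algebraMap K (AlgebraicClosure L) (Ecoef K L h α) =
      (Finset.univ.val.map fun σ : L →ₐ[K] AlgebraicClosure L => σ α).esymm h := by
  have hcard : (Finset.univ.val.map fun σ : L →ₐ[K] AlgebraicClosure L => σ α).card =
      Module.finrank K L := by
    rw [Multiset.card_map, Finset.card_val, Finset.card_univ, AlgHom.card]
  have h1 := Multiset.prod_X_sub_C_coeff
    (Finset.univ.val.map fun σ : L →ₐ[K] AlgebraicClosure L => σ α)
    (k := Module.finrank K L - h) (by omega)
  rw [hcard, Nat.sub_sub_self hh, Multiset.map_map] at h1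
  have h2 := congrArg (fun P => Polynomial.coeff P (Module.finrank K L - h)) (charpoly_map_eq (K := K) α)
  simp only [Polynomial.coeff_map] at h2
  rw [Ecoef, map_mul, h2]
  rw [Finset.prod_eq_multiset_prod]
  refine (congrArg _ h1).trans ?_
  rw [← mul_assoc]
  simp [← mul_pow]

end Conjugates

section Evaluation

open MvPolynomial

lemma esymm_map_mul {σ E : Type*} [Fintype σ] [CommRing E] (z : E) (y : σ → E) (h : ℕ) :
    (Finset.univ.val.map fun s => z * y s).esymm h = z ^ h * (Finset.univ.val.map y).esymm h := by
  rw [Finset.esymm_map_val, Finset.esymm_map_val, Finset.mul_sum]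
  refine Finset.sum_congr rfl fun t ht => ?_
  rw [Finset.prod_mul_distrib, Finset.prod_const, (Finset.mem_powersetCard.1 ht).2]

/-- Evaluation of the universal polynomial at elements `b_m`, `c_k` of a ring over which the `c_k`
need not come with roots: the roots `y` live in an extension. -/
lemma universal_eval {σ F E : Type*} [Fintype σ] [CommRing F] [CommRing E] {n h : ℕ}
    {D : MvPolynomial (Fin n) (MvPolynomial (Fin n) ℤ)}
    (hD : aeval (fun i : Fin n => esymm σ (MvPolynomial (Fin n) ℤ) (i + 1)) D =
        aeval (fun i : σ => Polynomial.aeval (X i : MvPolynomial σ (MvPolynomial (Fin n) ℤ))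
          (genPoly n)) (esymm σ ℤ h))
    (ι : F →+* E) (φ : MvPolynomial (Fin n) ℤ →+* F) (c : Fin n → F) (y : σ → E)
    (hc : ∀ i : Fin n, (Finset.univ.val.map y).esymm (i + 1) = ι (c i)) :
    ι (eval₂ φ c D) =
      (Finset.univ.val.map fun s => ∑ m : Fin n, ι (φ (X m)) * y s ^ (m : ℕ)).esymm h := by
  set Φ : MvPolynomial σ (MvPolynomial (Fin n) ℤ) →+* E := eval₂Hom (ι.comp φ) y with hΦ
  have h1 := congrArg Φ hD
  have hes : ∀ k, Φ (esymm σ (MvPolynomial (Fin n) ℤ) k) = (Finset.univ.val.map y).esymm k := by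
    intro k
    rw [Finset.esymm_map_val, esymm, map_sum]
    refine Finset.sum_congr rfl fun t _ => ?_
    rw [map_prod]
    simp [hΦ]
  have hF : ∀ s, Φ (Polynomial.aeval (X s : MvPolynomial σ (MvPolynomial (Fin n) ℤ)) (genPoly n)) =
      ∑ m : Fin n, ι (φ (X m)) * y s ^ (m : ℕ) := by
    intro s
    simp [genPoly, hΦ]
  have hl : Φ (aeval (fun i : Fin n => esymm σ (MvPolynomial (Fin n) ℤ) (i + 1)) D) =
      ι (eval₂ φ c D) := by
    rw [eval₂_comp_left, aeval_def, eval₂_comp_left]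
    congr 1
    · ext <;> simp [hΦ]
    · funext i
      simp only [Function.comp, hes, hc]
  rw [hl] at h1
  rw [h1, Finset.esymm_map_val, esymm, map_sum, map_sum]
  refine Finset.sum_congr rfl fun t _ => ?_
  rw [map_prod, map_prod]
  exact Finset.prod_congr rfl fun s _ => by rw [aeval_X, hF]

end Evaluation

/-! ### Additive valuations given by their values on nonzero elements -/

section Valuations

/-- The two laws of a discrete valuation `v`, imposed only on nonzero elements; the value `v 0`
carries no information. -/
structure IsVal {F : Type*} [Field F] (v : F → ℤ) : Prop where
  mul : ∀ x y : F, x ≠ 0 → y ≠ 0 → v (x * y) = v x + v y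
  add : ∀ x y : F, x ≠ 0 → y ≠ 0 → x + y ≠ 0 → min (v x) (v y) ≤ v (x + y)

/-- `VGe v s x` says that `x` has valuation at least `s`, with the convention `v(0) = ∞`. -/
def VGe {F : Type*} [Field F] (v : F → ℤ) (s : ℤ) (x : F) : Prop := x = 0 ∨ s ≤ v x

variable {F : Type*} [Field F] {v : F → ℤ}

namespace IsVal

lemma one (hv : IsVal v) : v 1 = 0 := by
  have := hv.mul 1 1 one_ne_zero one_ne_zero
  rw [mul_one] at this
  omega

lemma neg (hv : IsVal v) (x : F) : v (-x) = v x := by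
  by_cases hx : x = 0
  · rw [hx, neg_zero]
  have h1 := hv.mul (-1) (-1) (by simp) (by simp)
  rw [neg_one_mul, neg_neg, hv.one] at h1
  rw [← neg_one_mul, hv.mul _ _ (by simp) hx]
  omega

lemma pow (hv : IsVal v) {x : F} (hx : x ≠ 0) (k : ℕ) : v (x ^ k) = k * v x := by
  induction k with
  | zero => simp [hv.one]
  | succ k ih =>
    rw [pow_succ, hv.mul _ _ (pow_ne_zero _ hx) hx, ih]
    push_cast
    ring

lemma div (hv : IsVal v) {x y : F} (hx : x ≠ 0) (hy : y ≠ 0) : v (x / y) = v x - v y := by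
  have := hv.mul (x / y) y (div_ne_zero hx hy) hy
  rw [div_mul_cancel₀ _ hy] at this
  omega

lemma ge_neg (hv : IsVal v) {s : ℤ} {x : F} (hx : VGe v s x) : VGe v s (-x) := by
  rcases hx with rfl | hx
  · left; simp
  · right; rwa [hv.neg]

lemma ge_add (hv : IsVal v) {s : ℤ} {x y : F} (hx : VGe v s x) (hy : VGe v s y) :
    VGe v s (x + y) := by
  by_cases hx0 : x = 0
  · rwa [hx0, zero_add]
  by_cases hy0 : y = 0
  · rwa [hy0, add_zero]
  by_cases hxy : x + y = 0
  · exact Or.inl hxy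
  exact Or.inr ((le_min (hx.resolve_left hx0) (hy.resolve_left hy0)).trans (hv.add x y hx0 hy0 hxy))

lemma ge_mul (hv : IsVal v) {s t : ℤ} {x y : F} (hx : VGe v s x) (hy : VGe v t y) :
    VGe v (s + t) (x * y) := by
  by_cases hx0 : x = 0
  · left; simp [hx0]
  by_cases hy0 : y = 0
  · left; simp [hy0]
  right
  rw [hv.mul x y hx0 hy0]
  exact add_le_add (hx.resolve_left hx0) (hy.resolve_left hy0)

lemma ge_sum (hv : IsVal v) {s : ℤ} {ι : Type*} (t : Finset ι) (f : ι → F)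
    (hf : ∀ i ∈ t, VGe v s (f i)) : VGe v s (∑ i ∈ t, f i) :=
  Finset.sum_induction f (VGe v s) (fun _ _ => hv.ge_add) (Or.inl rfl) hf

lemma ge_one (hv : IsVal v) : VGe v 0 (1 : F) := Or.inr hv.one.ge

lemma ge_zero_mul (hv : IsVal v) {x y : F} (hx : VGe v 0 x) (hy : VGe v 0 y) :
    VGe v 0 (x * y) := by
  simpa using hv.ge_mul hx hy

lemma ge_prod_pow (hv : IsVal v) {ι : Type*} (t : Finset ι) (f : ι → F) (d : ι → ℕ)
    (hf : ∀ i ∈ t, VGe v 0 (f i)) : VGe v 0 (∏ i ∈ t, f i ^ d i) := by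
  refine Finset.prod_induction _ (VGe v 0) (fun _ _ => hv.ge_zero_mul) hv.ge_one fun i hi => ?_
  induction d i with
  | zero => rw [pow_zero]; exact hv.ge_one
  | succ k ih => rw [pow_succ]; exact hv.ge_zero_mul ih (hf i hi)

/-- The valuation ring, as a subring. -/
def subring (hv : IsVal v) : Subring F where
  carrier := {x | VGe v 0 x}
  mul_mem' := hv.ge_zero_mul
  one_mem' := hv.ge_one
  add_mem' := hv.ge_add
  zero_mem' := Or.inl rfl
  neg_mem' := hv.ge_neg

lemma ge_aeval (hv : IsVal v) {ι : Type*} (b : ι → F) (hb : ∀ i, VGe v 0 (b i))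
    (P : MvPolynomial ι ℤ) : VGe v 0 (MvPolynomial.aeval b P) := by
  change _ ∈ hv.subring
  rw [MvPolynomial.aeval_def, MvPolynomial.eval₂_eq]
  exact sum_mem fun d _ => mul_mem (by simp)
    (prod_mem fun i _ => pow_mem (show b i ∈ hv.subring from hb i) _)

lemma not_ge {x : F} (hx : x ≠ 0) {s : ℤ} (hs : v x < s) : ¬ VGe v s x := by
  rintro (h | h)
  · exact hx h
  · omega

lemma ge_mono {s t : ℤ} {x : F} (h : VGe v t x) (hst : s ≤ t) : VGe v s x :=
  h.imp_right hst.trans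

end IsVal

end Valuations

/-! ### Expansions in powers of a uniformizer -/

section Uniformizer

variable {K L : Type} [Field K] [Field L] [Algebra K L] {n : ℕ} {vK : K → ℤ} {vL : L → ℤ}

/-- The terms `a_i π^i`, `i < n`, have valuations in distinct classes modulo `n`, so none of them
has smaller valuation than their sum. -/
lemma term_ge (hvL : IsVal vL) (hext : ∀ x : K, x ≠ 0 → vL (algebraMap K L x) = (n : ℤ) * vK x)
    {π : L} (hπ0 : π ≠ 0) (hπ : vL π = 1) (a : Fin n → K) (s : ℤ)
    (hs : VGe vL s (∑ i, algebraMap K L (a i) * π ^ (i : ℕ))) (i : Fin n) :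
    VGe vL s (algebraMap K L (a i) * π ^ (i : ℕ)) := by
  by_contra hcon
  have hval : ∀ i : Fin n, a i ≠ 0 →
      vL (algebraMap K L (a i) * π ^ (i : ℕ)) = n * vK (a i) + (i : ℕ) := by
    intro i hi
    rw [hvL.mul _ _ (by simpa using hi) (pow_ne_zero _ hπ0), hext _ hi, hvL.pow hπ0, hπ, mul_one]
  have hne : ∀ i, a i = 0 → ∀ s, VGe vL s (algebraMap K L (a i) * π ^ (i : ℕ)) := by
    intro i hi s
    left
    simp [hi]
  have hai : a i ≠ 0 := fun h => hcon (hne i h s)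
  obtain ⟨k, hk, hmin⟩ := Finset.exists_min_image (Finset.univ.filter fun i => a i ≠ 0)
    (fun i => vL (algebraMap K L (a i) * π ^ (i : ℕ))) ⟨i, by simpa using hai⟩
  simp only [Finset.mem_filter, Finset.mem_univ, true_and] at hk hmin
  set T : Fin n → L := fun i => algebraMap K L (a i) * π ^ (i : ℕ) with hT
  have hks : vL (T k) < s := by
    refine (hmin i hai).trans_lt (lt_of_not_ge fun h => hcon (Or.inr h))
  have hTk0 : T k ≠ 0 := mul_ne_zero (by simpa using hk) (pow_ne_zero _ hπ0)
  refine IsVal.not_ge hTk0 (lt_add_one (vL (T k))) ?_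
  have hdec : T k = (∑ i, T i) + -∑ i ∈ Finset.univ.erase k, T i := by
    rw [← Finset.add_sum_erase _ _ (Finset.mem_univ k)]
    ring
  have hrest : VGe vL (vL (T k) + 1) (-∑ i ∈ Finset.univ.erase k, T i) := by
    refine hvL.ge_neg (hvL.ge_sum _ _ fun l hl => ?_)
    by_cases hl0 : a l = 0
    · exact hne l hl0 _
    right
    have h1 := hmin l hl0
    have h2 : vL (T l) ≠ vL (T k) := by
      intro h
      simp only [hT] at h
      rw [hval l hl0, hval k hk] at h
      apply Finset.ne_of_mem_erase hl
      have h3 : ((l : ℕ) : ℤ) % n = ((k : ℕ) : ℤ) % n := by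
        have := congrArg (· % (n : ℤ)) h
        simpa using this
      rw [Int.emod_eq_of_lt (by omega) (by have := l.2; omega),
        Int.emod_eq_of_lt (by omega) (by have := k.2; omega)] at h3
      exact Fin.ext (by exact_mod_cast h3)
    exact Int.add_one_le_iff.2 (lt_of_le_of_ne h1 (Ne.symm h2))
  have h4 := hvL.ge_add (IsVal.ge_mono hs hks) hrest
  rwa [← hdec] at h4

lemma linearIndependent_uniformizer_pow (hvL : IsVal vL)
    (hext : ∀ x : K, x ≠ 0 → vL (algebraMap K L x) = (n : ℤ) * vK x)
    {π : L} (hπ0 : π ≠ 0) (hπ : vL π = 1) :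
    LinearIndependent K fun i : Fin n => π ^ (i : ℕ) := by
  rw [Fintype.linearIndependent_iff]
  intro g hg i
  by_contra hi
  simp only [Algebra.smul_def] at hg
  have hne : algebraMap K L (g i) * π ^ (i : ℕ) ≠ 0 :=
    mul_ne_zero (by simpa using hi) (pow_ne_zero _ hπ0)
  exact IsVal.not_ge hne (lt_add_one _) (term_ge hvL hext hπ0 hπ g _ (Or.inl hg) i)

lemma exists_expansion (hvL : IsVal vL) (hn : 0 < n) (hrank : Module.finrank K L = n)
    (hext : ∀ x : K, x ≠ 0 → vL (algebraMap K L x) = (n : ℤ) * vK x)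
    {π : L} (hπ0 : π ≠ 0) (hπ : vL π = 1) (α : L) :
    ∃ a : Fin n → K, α = ∑ i, algebraMap K L (a i) * π ^ (i : ℕ) := by
  have : Nonempty (Fin n) := ⟨⟨0, hn⟩⟩
  let B := basisOfLinearIndependentOfCardEqFinrank
    (linearIndependent_uniformizer_pow hvL hext hπ0 hπ) (by simp [hrank])
  refine ⟨fun i => B.repr α i, ?_⟩
  have := (B.sum_repr α).symm
  simpa [B, Algebra.smul_def] using this

variable [FiniteDimensional K L]

lemma natDegree_minpoly (hvL : IsVal vL) (hrank : Module.finrank K L = n)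
    (hext : ∀ x : K, x ≠ 0 → vL (algebraMap K L x) = (n : ℤ) * vK x)
    {π : L} (hπ0 : π ≠ 0) (hπ : vL π = 1) : (minpoly K π).natDegree = n := by
  have hint : IsIntegral K π := IsIntegral.of_finite K π
  refine le_antisymm (hrank ▸ minpoly.natDegree_le π) ?_
  by_contra hlt
  push Not at hlt
  have h1 := minpoly.aeval K π
  rw [Polynomial.aeval_eq_sum_range' hlt, Finset.sum_range] at h1
  have h2 := Fintype.linearIndependent_iff.1 (linearIndependent_uniformizer_pow hvL hext hπ0 hπ) _ h1
    ⟨_, hlt⟩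
  exact one_ne_zero ((minpoly.monic hint).coeff_natDegree.symm.trans h2)

lemma charpoly_eq_minpoly (hvL : IsVal vL) (hrank : Module.finrank K L = n)
    (hext : ∀ x : K, x ≠ 0 → vL (algebraMap K L x) = (n : ℤ) * vK x)
    {π : L} (hπ0 : π ≠ 0) (hπ : vL π = 1) :
    (LinearMap.mulLeft K π).charpoly = minpoly K π := by
  have hint : IsIntegral K π := IsIntegral.of_finite K π
  refine Polynomial.eq_of_monic_of_dvd_of_natDegree_le (minpoly.monic hint)
    (LinearMap.charpoly_monic _) (minpoly.dvd K π (Algebra.aeval_self_charpoly_lmul π)) ?_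
  rw [LinearMap.charpoly_natDegree, natDegree_minpoly hvL hrank hext hπ0 hπ, hrank]

/-- The minimal polynomial of a uniformizer is Eisenstein, in two parts: `n v_K(c_k) ≥ k` for all
`k`, and `v_K(c_n) ≤ 1`. -/
lemma eisenstein (hvL : IsVal vL) (hrank : Module.finrank K L = n)
    (hext : ∀ x : K, x ≠ 0 → vL (algebraMap K L x) = (n : ℤ) * vK x)
    {π : L} (hπ0 : π ≠ 0) (hπ : vL π = 1) :
    (∀ k, 1 ≤ k → k ≤ n → cCoef K L π n k ≠ 0 → (k : ℤ) ≤ n * vK (cCoef K L π n k)) ∧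
    cCoef K L π n n ≠ 0 ∧ (n : ℤ) * vK (cCoef K L π n n) ≤ n := by
  have hint : IsIntegral K π := IsIntegral.of_finite K π
  have hdeg := natDegree_minpoly hvL hrank hext hπ0 hπ
  have hsum : π ^ n = ∑ i : Fin n,
      algebraMap K L (-(minpoly K π).coeff i) * π ^ (i : ℕ) := by
    have h1 := minpoly.aeval K π
    rw [Polynomial.aeval_eq_sum_range, hdeg, Finset.sum_range_succ,
      show (minpoly K π).coeff n = 1 from hdeg ▸ (minpoly.monic hint).coeff_natDegree, one_smul,
      Finset.sum_range] at h1
    rw [eq_neg_of_add_eq_zero_right h1, ← Finset.sum_neg_distrib]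
    exact Finset.sum_congr rfl fun i _ => by simp [Algebra.smul_def]
  have hvn : vL (π ^ n) = n := by rw [hvL.pow hπ0, hπ, mul_one]
  have hterm : ∀ i : Fin n, (minpoly K π).coeff i ≠ 0 →
      vL (algebraMap K L (-(minpoly K π).coeff i) * π ^ (i : ℕ)) =
        vL (algebraMap K L ((minpoly K π).coeff i)) + i := by
    intro i hi
    rw [hvL.mul _ _ (by simpa using hi) (pow_ne_zero _ hπ0), hvL.pow hπ0, hπ, mul_one, map_neg,
      hvL.neg]
  have hcv : ∀ k, 1 ≤ k → k ≤ n → cCoef K L π n k ≠ 0 →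
      (minpoly K π).coeff (n - k) ≠ 0 ∧
      vL (algebraMap K L ((minpoly K π).coeff (n - k))) = n * vK (cCoef K L π n k) := by
    intro k _ _ hk
    have h0 : (minpoly K π).coeff (n - k) ≠ 0 := fun h => hk (by simp [cCoef, h])
    refine ⟨h0, ?_⟩
    rw [← hext _ hk, cCoef]
    rcases neg_one_pow_eq_or K k with h | h <;> simp [h, hvL.neg]
  have part1 : ∀ k, 1 ≤ k → k ≤ n → cCoef K L π n k ≠ 0 →
      (k : ℤ) ≤ n * vK (cCoef K L π n k) := by
    intro k hk1 hkn hk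
    obtain ⟨h0, hv⟩ := hcv k hk1 hkn hk
    have h1 := term_ge hvL hext hπ0 hπ (fun i : Fin n => -(minpoly K π).coeff i) n
      (by rw [← hsum]; exact Or.inr hvn.ge) ⟨n - k, by omega⟩
    have h2 := h1.resolve_left (mul_ne_zero (by simpa using h0) (pow_ne_zero _ hπ0))
    have h3 := hterm ⟨n - k, by omega⟩ h0
    simp only at h2 h3
    rw [h3, hv] at h2
    omega
  refine ⟨part1, ?_⟩
  -- otherwise every term of the relation for `π ^ n` has valuation at least `n + 1`
  by_contra hcon
  refine IsVal.not_ge (pow_ne_zero n hπ0) (hvn.trans_lt (lt_add_one (n : ℤ))) ?_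
  rw [hsum]
  refine hvL.ge_sum _ _ fun i _ => ?_
  by_cases hi0 : (minpoly K π).coeff i = 0
  · left; simp [hi0]
  right
  rw [hterm i hi0]
  have hik : n - (n - (i : ℕ)) = i := by omega
  have hc0 : cCoef K L π n (n - i) ≠ 0 := by
    rw [cCoef, hik]
    exact mul_ne_zero (by simp) hi0
  have h1 := part1 (n - i) (by omega) (by omega) hc0
  have h2 := (hcv (n - i) (by omega) (by omega) hc0).2
  rw [hik] at h2
  rw [h2]
  by_cases hi : (i : ℕ) = 0
  · rw [hi, Nat.sub_zero] at hc0 ⊢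
    have : ¬ (n : ℤ) * vK (cCoef K L π n n) ≤ n := fun h => hcon ⟨hc0, h⟩
    push_cast
    omega
  · have h3 : (n : ℤ) * vK (cCoef K L π n (n - i)) ≠ ((n - i : ℕ) : ℤ) := by
      intro h
      have h4 : (n : ℤ) ∣ ((n - i : ℕ) : ℤ) := ⟨_, h.symm⟩
      have := Nat.le_of_dvd (by omega) (Int.natCast_dvd_natCast.1 h4)
      omega
    omega

end Uniformizer

/-! ### The bound -/

/-- The inequalities contained in the definition of `i_j`: it is at most
`n v_K(c_k) - k + (t - j) e_L` whenever `v̄_p(k) ≤ t` and `j ≤ t ≤ ν`. If `p = 0` in `L` and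
`t > j`, the right-hand side is `∞` and there is no information. -/
lemma iIdx_le {p ν n : ℕ} {K L : Type} [Field K] [Field L] {vK : K → ℤ} {vL : L → ℤ} {c : ℕ → K}
    {j : ℕ} {ij : ℤ} (hij : iIdx p ν n K L vK vL c j = ((ij : ℤ) : WithTop ℤ))
    {k t : ℕ} (hk1 : 1 ≤ k) (hkn : k ≤ n) (hkt : min (padicValNat p k) ν ≤ t)
    (hjt : j ≤ t) (htν : t ≤ ν) (hck : c k ≠ 0) (hp : (p : L) ≠ 0 ∨ t = j) :
    ij ≤ n * vK (c k) - k + (t - j : ℕ) * vL (p : L) := by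
  have h1 : iIdx p ν n K L vK vL c j ≤ _ := Finset.inf_le (Finset.mem_Icc.2 ⟨hjt, htν⟩)
  have h2 : iPi p ν n K vK c t ≤ _ := Finset.inf_le (b := k)
    (Finset.mem_filter.2 ⟨Finset.mem_Icc.2 ⟨hk1, hkn⟩, hkt⟩)
  rw [if_neg hck] at h2
  rw [hij] at h1
  have h3 : (t - j) • (if (p : L) = 0 then (⊤ : WithTop ℤ) else (vL (p : L) : WithTop ℤ)) =
      (((t - j : ℕ) * vL (p : L) : ℤ) : WithTop ℤ) := by
    rcases hp with hp | rfl
    · rw [if_neg hp, ← WithTop.coe_nsmul, nsmul_eq_mul]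
    · simp
  rw [h3] at h1
  have h4 := h1.trans (add_le_add_left h2 _)
  exact_mod_cast h4

/-- The coefficients `c_k` of the minimal polynomial of `π`, divided by `π ^ k`; the index `i`
stands for `k = i + 1`. -/
noncomputable def normCoef (K L : Type) [Field K] [Field L] [Algebra K L] (π : L) (n : ℕ)
    (i : Fin n) : L :=
  algebraMap K L (cCoef K L π n (i + 1)) / π ^ ((i : ℕ) + 1)

section Bound

open MvPolynomial

variable {K L : Type} [Field K] [Field L] [Algebra K L]
  {n : ℕ} {vK : K → ℤ} {vL : L → ℤ}

/-- The value `v_L(0)` is arbitrary, so `v_L(π) = 1` does not exclude `π = 0`. In that degenerate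
case the minimal polynomial is `X`; for `n > 1` this gives `c_{n-1} = ±1`, and `p ∤ n - 1` when
`ν > 0`, so that `i_j ≤ 0`. -/
lemma iIdx_zero_nonpos {p u ν j : ℕ} (hp : p.Prime) (hnu : n = u * p ^ ν) (hvK : IsVal vK)
    (hn : 0 < n) (hj : j ≤ ν) {ij : ℤ}
    (hij : iIdx p ν n K L vK vL (cCoef K L 0 n) j = ((ij : ℤ) : WithTop ℤ)) : ij ≤ 0 := by
  have hone : ∀ k, vK ((-1 : K) ^ k) = 0 := by
    intro k
    rcases neg_one_pow_eq_or K k with h | h <;> simp [h, hvK.neg, hvK.one]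
  rcases Nat.lt_or_ge 1 n with hn1 | hn1
  · have hc : cCoef K L 0 n (n - 1) = (-1) ^ (n - 1) := by
      rw [cCoef, minpoly.zero, Nat.sub_sub_self hn, Polynomial.coeff_X_one, mul_one]
    have hval : min (padicValNat p (n - 1)) ν = 0 := by
      rcases Nat.eq_zero_or_pos ν with rfl | hν
      · simp
      rw [padicValNat.eq_zero_of_not_dvd, Nat.zero_min]
      intro hd
      have hpn : p ∣ n := hnu ▸ (dvd_pow_self p hν.ne').mul_left u
      have := (Nat.dvd_sub_iff_right hn hpn).1 hd
      exact hp.one_lt.ne' (Nat.dvd_one.1 this)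
    have := iIdx_le hij (k := n - 1) (t := j) (by omega) (by omega) (by omega) le_rfl hj
      (by rw [hc]; simp) (Or.inr rfl)
    rw [hc, hone] at this
    simp at this
    omega
  · obtain rfl : n = 1 := by omega
    -- here `c_1 = 0` and `i_j` is not finite
    exfalso
    have htop : iIdx p ν 1 K L vK vL (cCoef K L 0 1) j = ⊤ := by
      rw [iIdx, Finset.inf_eq_top_iff]
      intro t _
      have : iPi p ν 1 K vK (cCoef K L 0 1) t = ⊤ := by
        rw [iPi, Finset.inf_eq_top_iff]
        intro k hk
        obtain rfl : k = 1 := by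
          have := Finset.mem_Icc.1 (Finset.mem_filter.1 hk).1
          omega
        rw [if_pos]
        simp [cCoef, minpoly.zero]
      rw [this, WithTop.top_add]
    rw [htop] at hij
    exact WithTop.top_ne_coe hij

lemma normCoef_ge (hvL : IsVal vL)
    (hext : ∀ x : K, x ≠ 0 → vL (algebraMap K L x) = (n : ℤ) * vK x)
    {π : L} (hπ0 : π ≠ 0) (hπ : vL π = 1) (i : Fin n) :
    VGe vL (n * vK (cCoef K L π n (i + 1)) - ((i : ℕ) + 1 : ℕ)) (normCoef K L π n i) := by
  by_cases h0 : cCoef K L π n (i + 1) = 0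
  · left; simp [normCoef, h0]
  right
  rw [normCoef, hvL.div (by simpa using h0) (pow_ne_zero _ hπ0), hext _ h0, hvL.pow hπ0, hπ,
    mul_one]

variable [FiniteDimensional K L]

lemma normCoef_integral (hvL : IsVal vL) (hrank : Module.finrank K L = n)
    (hext : ∀ x : K, x ≠ 0 → vL (algebraMap K L x) = (n : ℤ) * vK x)
    {π : L} (hπ0 : π ≠ 0) (hπ : vL π = 1) (i : Fin n) : VGe vL 0 (normCoef K L π n i) := by
  by_cases h0 : cCoef K L π n (i + 1) = 0
  · left; simp [normCoef, h0]
  refine IsVal.ge_mono (normCoef_ge hvL hext hπ0 hπ i) ?_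
  have := (eisenstein hvL hrank hext hπ0 hπ).1 (i + 1) (by omega) i.2 h0
  omega

/-- The scaling identity `E_h(α) = w ^ h D(b, c')` for `v_L(α) ≥ v_L(w) = r`, where
`α = ∑ a_m π^m`, `b_m = a_m π^m / w` and `c'_k = c_k / π^k`. It follows from
`w⁻¹ σ(α) = ∑ b_m (π⁻¹ σ(π))^m` by taking `e_h` over all embeddings `σ`. The homomorphism `φ` is
the evaluation `a_m ↦ b_m`; its values are integral because the `b_m` are. -/
lemma exists_scaling [Algebra.IsSeparable K L] [Infinite K] (hvL : IsVal vL) (hn : 0 < n)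
    (hrank : Module.finrank K L = n)
    (hext : ∀ x : K, x ≠ 0 → vL (algebraMap K L x) = (n : ℤ) * vK x)
    {π : L} (hπ0 : π ≠ 0) (hπ : vL π = 1) {r : ℤ} {w : L} (hw0 : w ≠ 0) (hw : vL w = r)
    {h : ℕ} (h2 : h ≤ n) {α : L} (hα : VGe vL r α) :
    ∃ (D : MvPolynomial (Fin n) (MvPolynomial (Fin n) ℤ)) (φ : MvPolynomial (Fin n) ℤ →+* L),
      (∀ P, VGe vL 0 (φ P)) ∧
      (∀ q : ℕ, q ∣ n → ∀ d : Fin n →₀ ℕ, (∀ i ∈ d.support, q ∣ (i : ℕ) + 1) →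
        (q : MvPolynomial (Fin n) ℤ) ∣ (h : MvPolynomial (Fin n) ℤ) * coeff d D) ∧
      algebraMap K L (Ecoef K L h α) = w ^ h * eval₂ φ (normCoef K L π n) D := by
  obtain ⟨a, ha⟩ := exists_expansion hvL hn hrank hext hπ0 hπ α
  have hchar := charpoly_eq_minpoly hvL hrank hext hπ0 hπ
  have hcE : ∀ k, cCoef K L π n k = Ecoef K L k π := by
    intro k
    rw [Ecoef, cCoef, hchar, hrank]
  obtain ⟨D, hD, hdvd⟩ := exists_universal (σ := L →ₐ[K] AlgebraicClosure L) (n := n)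
    (by rw [AlgHom.card, hrank]) h
  set b : Fin n → L := fun m => algebraMap K L (a m) * π ^ (m : ℕ) / w with hb
  have hb0 : ∀ m, VGe vL 0 (b m) := by
    intro m
    have h1 := term_ge hvL hext hπ0 hπ a r (ha ▸ hα) m
    rcases h1 with h1 | h1
    · left; simp only [hb, h1, zero_div]
    · by_cases h0 : algebraMap K L (a m) * π ^ (m : ℕ) = 0
      · left; simp only [hb, h0, zero_div]
      right
      simp only [hb]
      rw [hvL.div h0 hw0, hw]
      omega
  set φ : MvPolynomial (Fin n) ℤ →+* L := (aeval b : MvPolynomial (Fin n) ℤ →ₐ[ℤ] L).toRingHom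
    with hφ
  have hφX : ∀ m, φ (X m) = b m := fun m => by simp [hφ]
  refine ⟨D, φ, hvL.ge_aeval b hb0, hdvd, ?_⟩
  set ι := algebraMap L (AlgebraicClosure L) with hι
  apply ι.injective
  have hιπ : ι π ≠ 0 := by simpa using hπ0
  have hιw : ι w ≠ 0 := by simpa using hw0
  have hEn : ∀ (β : L) k, k ≤ n → ι (algebraMap K L (Ecoef K L k β)) =
      (Finset.univ.val.map fun σ : L →ₐ[K] AlgebraicClosure L => σ β).esymm k := by
    intro β k hk
    rw [hι, ← IsScalarTower.algebraMap_apply]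
    exact algebraMap_Ecoef (by omega) β
  have h1 := universal_eval hD ι φ (normCoef K L π n) (fun σ => (ι π)⁻¹ * σ π) (by
    intro i
    rw [esymm_map_mul, ← hEn _ _ i.2, ← hcE]
    simp only [normCoef, map_div₀, map_pow]
    rw [inv_pow, div_eq_mul_inv, mul_comm])
  have hconj : ∀ σ : L →ₐ[K] AlgebraicClosure L,
      ∑ m : Fin n, ι (φ (X m)) * ((ι π)⁻¹ * σ π) ^ (m : ℕ) = (ι w)⁻¹ * σ α := by
    intro σ
    rw [ha, map_sum, Finset.mul_sum]
    refine Finset.sum_congr rfl fun m _ => ?_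
    rw [hφX]
    simp only [hb, map_div₀, map_mul, map_pow, AlgHom.commutes]
    rw [hι, ← IsScalarTower.algebraMap_apply, ← hι, mul_pow, inv_pow]
    field_simp
  simp only [hconj] at h1
  rw [map_mul, h1, esymm_map_mul, ← hEn _ _ h2, map_pow, ← mul_assoc,
    ← mul_pow, mul_inv_cancel₀ hιw, one_pow, one_mul]

/-- Every monomial of `D(b, c')` has valuation at least `i_j`. If `t` is the least `v̄_p(k)` among
the `c'_k` occurring in the monomial and `t > j`, its coefficient is divisible by `p^(t-j)`, so the
valuation is at least `n v_K(c_k) - k + (t - j) e_L`. -/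
lemma monomial_ge {p u ν h : ℕ} (hp : p.Prime) (hnu : n = u * p ^ ν) (hvL : IsVal vL) (hn : 0 < n)
    (hrank : Module.finrank K L = n)
    (hext : ∀ x : K, x ≠ 0 → vL (algebraMap K L x) = (n : ℤ) * vK x)
    {π : L} (hπ0 : π ≠ 0) (hπ : vL π = 1) (h1 : 1 ≤ h) {ij : ℤ}
    (hij : iIdx p ν n K L vK vL (cCoef K L π n) (min (padicValNat p h) ν) =
      ((ij : ℤ) : WithTop ℤ))
    {D : MvPolynomial (Fin n) (MvPolynomial (Fin n) ℤ)} {φ : MvPolynomial (Fin n) ℤ →+* L}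
    (hφ0 : ∀ P, VGe vL 0 (φ P))
    (hdvd : ∀ q : ℕ, q ∣ n → ∀ d : Fin n →₀ ℕ, (∀ i ∈ d.support, q ∣ (i : ℕ) + 1) →
      (q : MvPolynomial (Fin n) ℤ) ∣ (h : MvPolynomial (Fin n) ℤ) * coeff d D)
    (d : Fin n →₀ ℕ) :
    VGe vL ij (φ (coeff d D) * ∏ i ∈ d.support, normCoef K L π n i ^ d i) := by
  obtain ⟨heis, hcn0, hcn⟩ := eisenstein hvL hrank hext hπ0 hπ
  have hc'v := normCoef_ge hvL hext hπ0 hπ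
  have hc'0 := normCoef_integral hvL hrank hext hπ0 hπ
  have hc'z : ∀ i : Fin n, cCoef K L π n (i + 1) = 0 → normCoef K L π n i = 0 := by
    intro i hi
    simp [normCoef, hi]
  set c' := normCoef K L π n
  set j := min (padicValNat p h) ν with hj
  set c : ℕ → K := cCoef K L π n with hc
  -- a coefficient `c_k` to which the definition of `i_j` is applied
  obtain ⟨k, t, hk1, hkn, hkt, hjt, htν, hck, hcoef⟩ : ∃ k t, 1 ≤ k ∧ k ≤ n ∧
      min (padicValNat p k) ν ≤ t ∧ j ≤ t ∧ t ≤ ν ∧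
      (∏ i ∈ d.support, c' i ^ d i = 0 ∨
        c k ≠ 0 ∧ VGe vL (n * vK (c k) - k) (∏ i ∈ d.support, c' i ^ d i)) ∧
      ((p ^ (t - j) : ℕ) : MvPolynomial (Fin n) ℤ) ∣ coeff d D := by
    have hprod : ∀ i ∈ d.support, ∏ i ∈ d.support, c' i ^ d i = 0 ∨ c (i + 1) ≠ 0 ∧
        VGe vL (n * vK (c (i + 1)) - ((i : ℕ) + 1 : ℕ)) (∏ i ∈ d.support, c' i ^ d i) := by
      intro i hi
      have hdi : d i ≠ 0 := Finsupp.mem_support_iff.1 hi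
      by_cases h0 : c (i + 1) = 0
      · left
        exact Finset.prod_eq_zero hi (by rw [hc'z i h0, zero_pow hdi])
      · right
        refine ⟨h0, ?_⟩
        obtain ⟨e, he⟩ := Nat.exists_eq_succ_of_ne_zero hdi
        rw [← Finset.mul_prod_erase _ _ hi, he, pow_succ', mul_assoc]
        have h3 : VGe vL 0 (c' i ^ e * ∏ x ∈ d.support.erase i, c' x ^ d x) := by
          refine hvL.ge_zero_mul ?_ (hvL.ge_prod_pow _ _ _ fun i _ => hc'0 i)
          simpa using hvL.ge_prod_pow {i} c' (fun _ => e) (fun i _ => hc'0 i)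
        simpa using hvL.ge_mul (hc'v i) h3
    have hpn : p ^ ν ∣ n := ⟨u, by rw [hnu, mul_comm]⟩
    have : Fact p.Prime := ⟨hp⟩
    have hdiv : ∀ t, j ≤ t → t ≤ ν → (∀ i ∈ d.support, p ^ t ∣ (i : ℕ) + 1) →
        ((p ^ (t - j) : ℕ) : MvPolynomial (Fin n) ℤ) ∣ coeff d D := by
      intro t hjt htν hall
      rcases hjt.eq_or_lt with rfl | hlt
      · simp
      have hjp : j = padicValNat p h := by omega
      rw [hjp]
      exact pow_dvd_of_dvd_mul hp (by omega)
        (hdvd (p ^ t) ((pow_dvd_pow p htν).trans hpn) d hall) (by omega)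
    by_cases hA : ∃ i ∈ d.support, min (padicValNat p ((i : ℕ) + 1)) ν ≤ j
    · obtain ⟨i, hi, hij'⟩ := hA
      exact ⟨i + 1, j, by omega, i.2, hij', le_rfl, min_le_right _ _, hprod i hi, by simp⟩
    push Not at hA
    rcases d.support.eq_empty_or_nonempty with hemp | hne
    · refine ⟨n, ν, hn, le_rfl, min_le_right _ _, min_le_right _ _, le_rfl, Or.inr ⟨hcn0, ?_⟩,
        hdiv ν (min_le_right _ _) le_rfl (by simp [hemp])⟩
      rw [hemp, Finset.prod_empty]
      exact IsVal.ge_mono hvL.ge_one (by omega)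
    · obtain ⟨i, hi, hmin⟩ := Finset.exists_min_image d.support
        (fun i => min (padicValNat p ((i : ℕ) + 1)) ν) hne
      refine ⟨i + 1, min (padicValNat p ((i : ℕ) + 1)) ν, by omega, i.2, le_rfl,
        (hA i hi).le, min_le_right _ _, hprod i hi,
        hdiv _ (hA i hi).le (min_le_right _ _) fun l hl => ?_⟩
      exact (pow_dvd_pow p ((hmin l hl).trans (min_le_left _ _))).trans pow_padicValNat_dvd
  rcases hck with hck | ⟨hck, hprod⟩
  · left; rw [hck, mul_zero]
  obtain ⟨z, hz⟩ := hcoef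
  have hpz : φ (coeff d D) = (p : L) ^ (t - j) * φ z := by
    rw [hz, map_mul, map_natCast, Nat.cast_pow]
  by_cases hpt : (p : L) ≠ 0 ∨ t = j
  · have hle := iIdx_le hij hk1 hkn hkt hjt htν hck hpt
    have hpv : VGe vL ((t - j : ℕ) * vL (p : L)) ((p : L) ^ (t - j)) := by
      right
      rcases hpt with hp0 | rfl
      · rw [hvL.pow hp0]
      · simp [hvL.one]
    rw [hpz]
    exact IsVal.ge_mono (hvL.ge_mul (hvL.ge_mul hpv (hφ0 z)) hprod) (by omega)
  · push Not at hpt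
    left
    rw [hpz, hpt.1, zero_pow (by omega)]
    ring

end Bound

theorem stmt13
    (p : ℕ) (hp : p.Prime)
    (K L : Type) [Field K] [Field L] [Algebra K L] [FiniteDimensional K L]
    [Algebra.IsSeparable K L]
    (n : ℕ) (hn : 0 < n) (hrank : Module.finrank K L = n)
    (vK : K → ℤ) (vL : L → ℤ)
    (hvKmul : ∀ x y : K, x ≠ 0 → y ≠ 0 → vK (x * y) = vK x + vK y)
    (hvKadd : ∀ x y : K, x ≠ 0 → y ≠ 0 → x + y ≠ 0 → min (vK x) (vK y) ≤ vK (x + y))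
    (hvKsurj : ∀ m : ℤ, ∃ x : K, x ≠ 0 ∧ vK x = m)
    (hvLmul : ∀ x y : L, x ≠ 0 → y ≠ 0 → vL (x * y) = vL x + vL y)
    (hvLadd : ∀ x y : L, x ≠ 0 → y ≠ 0 → x + y ≠ 0 → min (vL x) (vL y) ≤ vL (x + y))
    (hvLsurj : ∀ m : ℤ, ∃ x : L, x ≠ 0 ∧ vL x = m)
    (hext : ∀ x : K, x ≠ 0 → vL (algebraMap K L x) = (n : ℤ) * vK x)
    (hcomplete : ∀ s : ℕ → K,
      (∀ m : ℤ, ∃ N : ℕ, ∀ i, N ≤ i → ∀ j, N ≤ j → s i - s j = 0 ∨ m ≤ vK (s i - s j)) →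
      ∃ x : K, ∀ m : ℤ, ∃ N : ℕ, ∀ i, N ≤ i → s i - x = 0 ∨ m ≤ vK (s i - x))
    (hreschar : (p : K) = 0 ∨ 1 ≤ vK (p : K))
    (hresperf : ∀ x : K, (x = 0 ∨ 0 ≤ vK x) →
      ∃ y : K, (y = 0 ∨ 0 ≤ vK y) ∧ (x - y ^ p = 0 ∨ 1 ≤ vK (x - y ^ p)))
    (u ν : ℕ) (hu : ¬ p ∣ u) (hnu : n = u * p ^ ν)
    (πL : L) (hπ : vL πL = 1)
    (r : ℤ) (h : ℕ) (h1 : 1 ≤ h) (h2 : h ≤ n)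
    -- `ij` is the `j`-th index of inseparability `i_j` (a finite integer), `j = v̄_p(h)`
    (ij : ℤ)
    (hij : iIdx p ν n K L vK vL (cCoef K L πL n) (min (padicValNat p h) ν) =
      ((ij : ℤ) : WithTop ℤ)) :
    ∀ α : L, (α = 0 ∨ r ≤ vL α) →
      (Ecoef K L h α = 0 ∨
        ⌈((ij : ℚ) + (h : ℚ) * (r : ℚ)) / (n : ℚ)⌉ ≤ vK (Ecoef K L h α)) := by
  intro α hα
  have hvL : IsVal vL := ⟨hvLmul, hvLadd⟩
  have hinf : Infinite K := by
    choose f hf using hvKsurj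
    exact Infinite.of_injective f fun a b hab => by rw [← (hf a).2, ← (hf b).2, hab]
  obtain ⟨w, hw0, hw⟩ := hvLsurj r
  by_cases hE : Ecoef K L h α = 0
  · exact Or.inl hE
  right
  obtain ⟨y, hy, hDv⟩ : ∃ y : L, algebraMap K L (Ecoef K L h α) = w ^ h * y ∧ VGe vL ij y := by
    by_cases hπ0 : πL = 0
    · subst hπ0
      have hij0 := iIdx_zero_nonpos hp hnu ⟨hvKmul, hvKadd⟩ hn (min_le_right _ _) hij
      obtain ⟨π, hπ0, hπ1⟩ := hvLsurj 1
      obtain ⟨D, φ, hφ0, -, hscale⟩ := exists_scaling hvL hn hrank hext hπ0 hπ1 hw0 hw h2 hα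
      refine ⟨_, hscale, ?_⟩
      rw [MvPolynomial.eval₂_eq]
      exact IsVal.ge_mono (hvL.ge_sum _ _ fun d _ => hvL.ge_zero_mul (hφ0 _)
        (hvL.ge_prod_pow _ _ _ fun i _ => normCoef_integral hvL hrank hext hπ0 hπ1 i)) hij0
    · obtain ⟨D, φ, hφ0, hdvd, hscale⟩ := exists_scaling hvL hn hrank hext hπ0 hπ hw0 hw h2 hα
      refine ⟨_, hscale, ?_⟩
      rw [MvPolynomial.eval₂_eq]
      exact hvL.ge_sum _ _ fun d _ =>
        monomial_ge hp hnu hvL hn hrank hext hπ0 hπ h1 hij hφ0 hdvd d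
  have hwv : VGe vL (h * r) (w ^ h) := Or.inr (by rw [hvL.pow hw0, hw])
  have hfin := hvL.ge_mul hwv hDv
  rw [← hy] at hfin
  have hfin := hfin.resolve_left (by simpa using hE)
  rw [hext _ hE] at hfin
  rw [Int.ceil_le, div_le_iff₀ (by exact_mod_cast hn)]
  have hq : ((h * r + ij : ℤ) : ℚ) ≤ ((n * vK (Ecoef K L h α) : ℤ) : ℚ) := by exact_mod_cast hfin
  push_cast at hq
  linarith
end

section
/- Let R be a commutative ring, let n ≥ 1, let 1 ≤ h ≤ n, and let r, N be integers with 1 ≤ r ≤ N. Let a_r, a_{r+1}, …, a_N ∈ R and set φ(X) = a_rX^r + a_{r+1}X^{r+1} + … + a_NX^N. Then in R[X_1,…,X_n] one has e_h(φ(X_1),…,φ(X_n)) = Σ_μ a_μ · m_μ(X_1,…,X_n), where the sum ranges over all multisets μ = {μ_1,…,μ_h} of exactly h positive integers with r ≤ μ_i ≤ N for all i, a_μ = a_{μ_1}a_{μ_2}⋯a_{μ_h}, e_h is the h-th elementary symmetric polynomial in n variables, and m_μ is the monomial symmetric polynomial in n variables associated to μ. -/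
/-!
Both sides are compared coefficientwise. Fix an exponent vector `d`, and let `partType d` be the
multiset of its nonzero exponents. Expanding `∏ i ∈ S, φ(X_i)`, the monomial `X^d` occurs only if
`S` is the support of `d` (because `r ≥ 1`) and every nonzero exponent lies in `[r, N]`; its
coefficient is then `∏ i ∈ S, a (d i)` (`coeff_prod_phi`). Hence on the left only the summand
`S = d.support` contributes. On the right, `m_μ` has coefficient `1` at `d` if `μ = partType d`
and `0` otherwise (`coeff_msymmM`), so only `μ = partType d` contributes. The two contributions
agree, since the product of `a` over `partType d` is `∏ i ∈ d.support, a (d i)`.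
-/

open scoped Classical

/-- The monomial symmetric polynomial in `n` variables associated to the partition
(multiset of positive integers) `μ`: the sum of all distinct monomials whose multiset of
nonzero exponents equals `μ`. -/
noncomputable def msymmM (n : ℕ) (R : Type) [CommSemiring R] (μ : Multiset ℕ) :
    MvPolynomial (Fin n) R :=
  ∑ d : Fin n → Fin (μ.sum + 1),
    if (Multiset.map (fun i => (d i : ℕ)) Finset.univ.val).filter (· ≠ 0) = μ then
      MvPolynomial.monomial (Finsupp.equivFunOnFinite.symm fun i => (d i : ℕ)) (1 : R)
    else 0

/-- The multiset of nonzero exponents of the exponent vector `d`. -/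
noncomputable def partType {n : ℕ} (d : Fin n →₀ ℕ) : Multiset ℕ :=
  d.support.val.map d

theorem filter_map_eq_partType {n : ℕ} (d : Fin n →₀ ℕ) :
    (Multiset.map (fun i => d i) Finset.univ.val).filter (· ≠ 0) = partType d := by
  have hs : d.support = Finset.univ.filter (fun i => d i ≠ 0) := by ext i; simp
  rw [partType, hs, Multiset.filter_map, Finset.filter_val]
  rfl

theorem coeff_msymmM {n : ℕ} (R : Type) [CommSemiring R] (μ : Multiset ℕ) (d : Fin n →₀ ℕ) :
    (msymmM n R μ).coeff d = if partType d = μ then 1 else 0 := by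
  have key : ∀ e : Fin n → Fin (μ.sum + 1),
      MvPolynomial.coeff d (if (Multiset.map (fun i => (e i : ℕ)) Finset.univ.val).filter
          (· ≠ 0) = μ then
        MvPolynomial.monomial (Finsupp.equivFunOnFinite.symm fun i => (e i : ℕ)) (1 : R) else 0)
      = if (∀ i, (e i : ℕ) = d i) ∧ partType d = μ then 1 else 0 := by
    intro e
    by_cases he : ∀ i, (e i : ℕ) = d i
    · have hd : (Finsupp.equivFunOnFinite.symm fun i => (e i : ℕ)) = d := by
        ext i; simp [he]
      simp only [he, filter_map_eq_partType]
      split_ifs with h1 h2 h2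
      · have hd' : (Finsupp.equivFunOnFinite.symm fun i => d i) = d := by ext i; simp
        rw [hd']; simp
      · simp_all
      · simp_all
      · simp
    · have hd : (Finsupp.equivFunOnFinite.symm fun i => (e i : ℕ)) ≠ d := by
        rintro rfl; exact he fun i => by simp
      rw [if_neg (fun h : (∀ i, (e i : ℕ) = d i) ∧ partType d = μ => he h.1)]
      split_ifs
      · rw [MvPolynomial.coeff_monomial, if_neg hd]
      · simp
  rw [msymmM, MvPolynomial.coeff_sum, Finset.sum_congr rfl fun e _ => key e]
  by_cases hμ : partType d = μ
  · -- each exponent is at most `μ.sum`, so `d` is one of the bounded exponent vectors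
    have hb : ∀ i, d i < μ.sum + 1 := by
      intro i
      by_cases hi : d i = 0
      · omega
      · have hm : d i ∈ μ := by
          rw [← hμ, partType]
          exact Multiset.mem_map_of_mem _ (by simpa using hi)
        have := Multiset.le_sum_of_mem hm
        omega
    rw [Finset.sum_eq_single (fun i => ⟨d i, hb i⟩)]
    · simp [hμ]
    · intro e _ hne
      rw [if_neg]
      rintro ⟨he, -⟩
      exact hne (funext fun i => Fin.ext (he i))
    · simp
  · simp [hμ]

/-- The hypothesis `1 ≤ r` forces every variable `X_i` with `i ∈ S` to occur in each monomial of
the expansion, so that `S` is recovered as the support of the exponent vector. -/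
theorem coeff_prod_phi {n : ℕ} {R : Type} [CommSemiring R] (r N : ℕ) (hr : 1 ≤ r) (a : ℕ → R)
    (S : Finset (Fin n)) (d : Fin n →₀ ℕ) :
    MvPolynomial.coeff d (∏ i ∈ S, (∑ t ∈ Finset.Icc r N,
        MvPolynomial.C (a t) * MvPolynomial.X i ^ t : MvPolynomial (Fin n) R)) =
      if S = d.support ∧ ∀ i ∈ d.support, d i ∈ Finset.Icc r N then
        ∏ i ∈ d.support, a (d i) else 0 := by
  -- the product over `S` becomes one over all variables by inserting the factor `X_i ^ 0` off `S`
  have e1 : (∏ i ∈ S, (∑ t ∈ Finset.Icc r N,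
        MvPolynomial.C (a t) * MvPolynomial.X i ^ t : MvPolynomial (Fin n) R)) =
      ∏ i, ∑ t ∈ (if i ∈ S then Finset.Icc r N else {0}),
        MvPolynomial.C (if i ∈ S then a t else 1) * MvPolynomial.X i ^ t := by
    rw [← Finset.prod_subset (Finset.subset_univ S)]
    · exact Finset.prod_congr rfl fun i hi => by simp [hi]
    · intro i _ hi; simp [hi]
  have e2 : ∀ p : Fin n → ℕ,
      (∏ i, (MvPolynomial.C (if i ∈ S then a (p i) else 1) * MvPolynomial.X i ^ p i :
        MvPolynomial (Fin n) R)) =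
      MvPolynomial.monomial (Finsupp.equivFunOnFinite.symm p) (∏ i ∈ S, a (p i)) := by
    intro p
    rw [MvPolynomial.monomial_eq, Finset.prod_mul_distrib, ← map_prod, Finset.prod_ite_mem,
      Finset.univ_inter, Finsupp.prod_fintype _ _ (by simp)]
    simp
  rw [e1, Finset.prod_univ_sum, MvPolynomial.coeff_sum]
  simp only [e2, MvPolynomial.coeff_monomial]
  have e3 : ∀ p : Fin n → ℕ, (Finsupp.equivFunOnFinite.symm p = d) ↔ p = d := by
    intro p
    rw [Equiv.symm_apply_eq]
    rfl
  simp only [e3]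
  rw [Finset.sum_ite_eq']
  have e4 : (⇑d ∈ Fintype.piFinset fun i => if i ∈ S then Finset.Icc r N else {0}) ↔
      S = d.support ∧ ∀ i ∈ d.support, d i ∈ Finset.Icc r N := by
    rw [Fintype.mem_piFinset]
    constructor
    · intro H
      have hS : S = d.support := by
        ext i
        have := H i
        by_cases hi : i ∈ S
        · simp [hi] at this ⊢; omega
        · simp [hi] at this ⊢; omega
      refine ⟨hS, fun i hi => ?_⟩
      have := H i
      rwa [if_pos (hS ▸ hi)] at this
    · rintro ⟨rfl, H⟩ i
      split_ifs with hi
      · exact H i hi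
      · simpa using hi
  simp only [e4]
  split_ifs with hc
  · rw [hc.1]
  · rfl

theorem stmt19 (R : Type) [CommRing R] (n : ℕ) (hn : 1 ≤ n)
    (h : ℕ) (h1 : 1 ≤ h) (h2 : h ≤ n)
    (r N : ℕ) (hr : 1 ≤ r) (hrN : r ≤ N) (a : ℕ → R) :
    -- `e_h(φ(X₁),…,φ(Xₙ)) = Σ_μ a_μ · m_μ(X₁,…,Xₙ)` where `φ(X) = Σ_{t=r}^{N} a_t X^t`
    -- and `μ` ranges over multisets of `h` integers in `[r, N]`.
    ∑ S ∈ Finset.powersetCard h (Finset.univ : Finset (Fin n)),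
        ∏ i ∈ S, (∑ t ∈ Finset.Icc r N, MvPolynomial.C (a t) * MvPolynomial.X i ^ t) =
      ∑ μ ∈ Finset.sym (Finset.Icc r N) h,
        MvPolynomial.C (((μ : Multiset ℕ).map a).prod) * msymmM n R (μ : Multiset ℕ) := by
  ext d
  simp only [MvPolynomial.coeff_sum, MvPolynomial.coeff_C_mul, coeff_msymmM,
    coeff_prod_phi r N hr a]
  by_cases hc : d.support.card = h ∧ ∀ i ∈ d.support, d i ∈ Finset.Icc r N
  · obtain ⟨hcard, hmem⟩ := hc
    have hpc : Multiset.card (partType d) = h := by simpa [partType] using hcard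
    rw [Finset.sum_eq_single d.support, Finset.sum_eq_single (Sym.mk (partType d) hpc)]
    · rw [if_pos ⟨rfl, hmem⟩, Sym.coe_mk, if_pos rfl, mul_one, partType, Multiset.map_map]
      rfl
    · intro μ _ hne
      rw [if_neg, mul_zero]
      intro hμ
      exact hne (Subtype.ext hμ.symm)
    · intro hn'
      refine absurd (Finset.mem_sym_iff.2 fun t ht => ?_) hn'
      obtain ⟨i, hi, rfl⟩ := Multiset.mem_map.1 (show t ∈ partType d from ht)
      exact hmem i hi
    · intro S _ hS
      rw [if_neg fun H => hS H.1]
    · intro hn'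
      exact absurd (Finset.mem_powersetCard.2 ⟨Finset.subset_univ _, hcard⟩) hn'
  · rw [Finset.sum_eq_zero, Finset.sum_eq_zero]
    · intro μ hμ
      rw [if_neg, mul_zero]
      intro hd
      refine hc ⟨?_, fun i hi => ?_⟩
      · have := congrArg Multiset.card hd
        simpa [partType] using this
      · refine Finset.mem_sym_iff.1 hμ _ ?_
        rw [← Sym.mem_coe, ← hd]
        exact Multiset.mem_map_of_mem _ hi
    · intro S hS
      rw [if_neg]
      rintro ⟨rfl, hmem⟩
      exact hc ⟨(Finset.mem_powersetCard.1 hS).2, hmem⟩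
end
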